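/- There exists a constant C > 0 depending only on n such that, for every abstract Monge–Ampère pairing setup (W, B, 𝟙, F) as in the context, every choice of reference element φ_ref ∈ F, and all φ₁, φ₂, ψ₁, …, ψ_{n−1} ∈ F: −B(φ₁−φ₂, φ₁−φ₂, ψ₁, …, ψ_{n−1}) ≤ C · I(φ₁, φ₂)^{1/2^{n−1}} · (max{J(φ₁), J(φ₂), J(ψ₁), …, J(ψ_{n−1})})^{1 − 1/2^{n−1}}. -/

import Mathlib

open Finset

/-- Abstract Monge–Ampère pairing setup with `n = m + 1`: a symmetric multilinear
form `B` on `W^(n+1) = W^(m+2)`, a unit element `one`, and a nonempty convex set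
`F ⊆ W`, satisfying (i) normalization `B(𝟙, φ₁, …, φₙ) = 1`, (ii) integration by
parts `B(u, 𝟙, g₂, …, gₙ) = 0` for `u ∈ W₀` and `gᵢ ∈ W' = span (F ∪ {𝟙})`, and
(iii) the Cauchy–Schwarz / local Hodge index inequality
`B(u, u, φ₁, …, φ_{n-1}) ≤ 0` for `u ∈ W₀`. -/
structure MASetup (m : ℕ) (W : Type*) [AddCommGroup W] [Module ℝ W] where
  B : MultilinearMap ℝ (fun _ : Fin (m + 2) => W) ℝ
  symm : ∀ (v : Fin (m + 2) → W) (σ : Equiv.Perm (Fin (m + 2))), B (v ∘ σ) = B v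
  one : W
  F : Set W
  Fne : F.Nonempty
  Fconv : Convex ℝ F
  unital : ∀ g : Fin (m + 1) → W, (∀ i, g i ∈ F) → B (Fin.cons one g) = 1
  parts : ∀ u ∈ Submodule.span ℝ ({x | ∃ φ ∈ F, ∃ ψ ∈ F, x = φ - ψ} ∪ {one}),
      ∀ g : Fin m → W, (∀ i, g i ∈ Submodule.span ℝ (F ∪ {one})) →
        B (Fin.cons u (Fin.cons one g)) = 0
  hodge : ∀ u ∈ Submodule.span ℝ ({x | ∃ φ ∈ F, ∃ ψ ∈ F, x = φ - ψ} ∪ {one}),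
      ∀ g : Fin m → W, (∀ i, g i ∈ F) → B (Fin.cons u (Fin.cons u g)) ≤ 0

namespace MASetup

variable {m : ℕ} {W : Type*} [AddCommGroup W] [Module ℝ W]

/-- The vector with `j` copies of `φ` followed by copies of `ψ`. -/
def mixVec (φ ψ : W) (j : ℕ) {k : ℕ} : Fin k → W := fun i => if (i : ℕ) < j then φ else ψ

/-- The linear span `W₀` of the differences of elements of `F` together with `one`. -/
def W0 (S : MASetup m W) : Submodule ℝ W :=
  Submodule.span ℝ ({x | ∃ φ ∈ S.F, ∃ ψ ∈ S.F, x = φ - ψ} ∪ {S.one})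

/-- The Monge–Ampère energy
`E(φ, ψ) = (n+1)⁻¹ ∑_{j=0}^{n} B(φ-ψ, φ, …, φ, ψ, …, ψ)` with `j` copies of `φ`
and `n - j` copies of `ψ` among the last `n` arguments. -/
noncomputable def energy (S : MASetup m W) (φ ψ : W) : ℝ :=
  ((m : ℝ) + 2)⁻¹ * ∑ j ∈ Finset.range (m + 2), S.B (Fin.cons (φ - ψ) (mixVec φ ψ j))

/-- The functional `I(φ, ψ) = B(φ-ψ, ψ, …, ψ) - B(φ-ψ, φ, …, φ)`. -/
noncomputable def Ifun (S : MASetup m W) (φ ψ : W) : ℝ :=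
  S.B (Fin.cons (φ - ψ) fun _ => ψ) - S.B (Fin.cons (φ - ψ) fun _ => φ)

/-- The functional `J_ψ(φ) = B(φ-ψ, ψ, …, ψ) - E(φ, ψ)`. -/
noncomputable def Jfun (S : MASetup m W) (ψ φ : W) : ℝ :=
  S.B (Fin.cons (φ - ψ) fun _ => ψ) - S.energy φ ψ

end MASetup

namespace MASetup

variable {m : ℕ} {W : Type*} [AddCommGroup W] [Module ℝ W]

/-- The positive semidefinite form `-B(u, v, g)`. -/
def bf (S : MASetup m W) (u v : W) (g : Fin m → W) : ℝ := -S.B (Fin.cons u (Fin.cons v g))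

lemma B_congr (S : MASetup m W) (v w : Fin (m + 2) → W)
    (h : Finset.univ.val.map v = Finset.univ.val.map w) : S.B v = S.B w := by
  classical
  have hc : ∀ x, Nonempty ({a // v a = x} ≃ {a // w a = x}) := fun x => by
    apply Fintype.card_eq.1
    have h1 := congrArg (Multiset.count x) h
    rw [Multiset.count_map, Multiset.count_map] at h1
    rw [Fintype.card_subtype, Fintype.card_subtype]
    simp only [eq_comm (a := x)] at h1
    exact h1
  let σ : Equiv.Perm (Fin (m + 2)) := Equiv.ofFiberEquiv fun x => (hc x).some
  have hσ : w ∘ σ = v := funext fun a => Equiv.ofFiberEquiv_map _ a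
  rw [← hσ, S.symm]

lemma map_cons {k : ℕ} (a : W) (g : Fin k → W) :
    Finset.univ.val.map (Fin.cons a g : Fin (k + 1) → W) = a ::ₘ Finset.univ.val.map g := by
  rw [Fin.univ_succ]
  simp [Multiset.map_map, Function.comp_def]

lemma bf_comm (S : MASetup m W) (u v : W) (g : Fin m → W) : S.bf u v g = S.bf v u g := by
  unfold bf
  rw [S.B_congr]
  simp only [map_cons]
  exact Multiset.cons_swap _ _ _

lemma bf_congr (S : MASetup m W) (u v : W) (g g' : Fin m → W)
    (h : Finset.univ.val.map g = Finset.univ.val.map g') : S.bf u v g = S.bf u v g' := by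
  unfold bf
  rw [S.B_congr]
  simp only [map_cons, h]

lemma map_update {k : ℕ} (g : Fin k → W) (i : Fin k) (x : W) :
    Finset.univ.val.map (Function.update g i x) = x ::ₘ (Finset.univ.erase i).val.map g := by
  classical
  conv_lhs => rw [← Finset.insert_erase (Finset.mem_univ i)]
  rw [Finset.insert_val_of_notMem (Finset.notMem_erase _ _), Multiset.map_cons]
  congr 1
  · simp
  · apply Multiset.map_congr rfl
    intro j hj
    have : j ≠ i := Finset.ne_of_mem_erase (s := Finset.univ) hj
    simp [this]

lemma bf_exch (S : MASetup m W) (u v x : W) (g : Fin m → W) (i : Fin m) :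
    S.bf u v (Function.update g i x) = S.bf u x (Function.update g i v) := by
  unfold bf
  rw [S.B_congr]
  simp only [map_cons, map_update]
  rw [Multiset.cons_swap v x]

lemma bf_sub_left (S : MASetup m W) (u u' v : W) (g : Fin m → W) :
    S.bf (u - u') v g = S.bf u v g - S.bf u' v g := by
  unfold bf
  have := S.B.map_update_sub (Fin.cons 0 (Fin.cons v g)) 0 u u'
  simp only [Fin.update_cons_zero] at this
  rw [this]; ring

lemma bf_smul_left (S : MASetup m W) (c : ℝ) (u v : W) (g : Fin m → W) :
    S.bf (c • u) v g = c * S.bf u v g := by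
  unfold bf
  have := S.B.map_update_smul (Fin.cons 0 (Fin.cons v g)) 0 c u
  simp only [Fin.update_cons_zero] at this
  rw [this]; simp

lemma bf_sub_right (S : MASetup m W) (u u' v : W) (g : Fin m → W) :
    S.bf v (u - u') g = S.bf v u g - S.bf v u' g := by
  rw [bf_comm, bf_sub_left, S.bf_comm u, S.bf_comm u']

lemma bf_smul_right (S : MASetup m W) (c : ℝ) (u v : W) (g : Fin m → W) :
    S.bf v (c • u) g = c * S.bf v u g := by
  rw [bf_comm, bf_smul_left, S.bf_comm u]

lemma bf_update_sub (S : MASetup m W) (u v x y : W) (g : Fin m → W) (i : Fin m) :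
    S.bf u v (Function.update g i (x - y)) =
      S.bf u v (Function.update g i x) - S.bf u v (Function.update g i y) := by
  rw [bf_exch, bf_sub_right, bf_exch, S.bf_exch u y]

lemma bf_nonneg (S : MASetup m W) {u : W} (hu : u ∈ S.W0) {g : Fin m → W}
    (hg : ∀ i, g i ∈ S.F) : 0 ≤ S.bf u u g := by
  have := S.hodge u hu g hg
  unfold bf; linarith

lemma sub_mem_W0 (S : MASetup m W) {x y : W} (hx : x ∈ S.F) (hy : y ∈ S.F) : x - y ∈ S.W0 :=
  Submodule.subset_span (Or.inl ⟨x, hx, y, hy, rfl⟩)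

lemma bf_quad (S : MASetup m W) {u v : W} (hu : u ∈ S.W0) (hv : v ∈ S.W0) {g : Fin m → W}
    (hg : ∀ i, g i ∈ S.F) (t : ℝ) :
    0 ≤ S.bf u u g - 2 * t * S.bf u v g + t ^ 2 * S.bf v v g := by
  have := S.bf_nonneg (S.W0.sub_mem hu (S.W0.smul_mem t hv)) hg
  rw [bf_sub_left, bf_sub_right, bf_sub_right, bf_smul_left, bf_smul_left, bf_smul_right,
    bf_smul_right, S.bf_comm v u] at this
  linarith

lemma bf_cs (S : MASetup m W) {u v : W} (hu : u ∈ S.W0) (hv : v ∈ S.W0) {g : Fin m → W}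
    (hg : ∀ i, g i ∈ S.F) : S.bf u v g ^ 2 ≤ S.bf u u g * S.bf v v g := by
  have := discrim_le_zero (a := S.bf v v g) (b := -2 * S.bf u v g) (c := S.bf u u g)
    (fun t => by have := S.bf_quad hu hv hg t; linarith)
  unfold discrim at this
  linarith

lemma bf_weak (S : MASetup m W) {u v : W} (hu : u ∈ S.W0) (hv : v ∈ S.W0) {g : Fin m → W}
    (hg : ∀ i, g i ∈ S.F) {δ : ℝ} (hδ : 0 < δ) :
    |S.bf u v g| ≤ (1 / (2 * δ)) * S.bf u u g + δ / 2 * S.bf v v g := by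
  have h1 := S.bf_quad hu hv hg δ
  have h2 := S.bf_quad hu hv hg (-δ)
  have e : (1 / (2 * δ)) * S.bf u u g + δ / 2 * S.bf v v g =
    (S.bf u u g + δ ^ 2 * S.bf v v g) / (2 * δ) := by field_simp
  rw [e, le_div_iff₀ (by positivity)]
  rcases abs_cases (S.bf u v g) with ⟨h, _⟩ | ⟨h, _⟩ <;> rw [h] <;> nlinarith

lemma bf_step (S : MASetup m W) (x y γ : W) (g : Fin m → W) (i : Fin m) :
    S.bf (x - y) (x - y) (Function.update g i γ) =
      S.bf (x - y) (x - y) (Function.update g i y) +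
      S.bf (x - y) (γ - y) (Function.update g i x) -
      S.bf (x - y) (γ - y) (Function.update g i y) := by
  have h := S.bf_update_sub (x - y) (x - y) γ y g i
  rw [bf_exch, bf_update_sub] at h
  linarith

/-! Base estimates -/

lemma map_mixVec (φ ψ : W) (j k : ℕ) (hj : j ≤ k) :
    Finset.univ.val.map (mixVec φ ψ j : Fin k → W) =
      Multiset.replicate j φ + Multiset.replicate (k - j) ψ := by
  induction k generalizing j with
  | zero => 
    obtain rfl : j = 0 := by omega
    simp
  | succ k ih =>
    cases j with
    | zero =>
      have : (mixVec φ ψ 0 : Fin (k + 1) → W) = fun _ => ψ := by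
        funext i; simp [mixVec]
      rw [this]; simp
    | succ j =>
      have : (mixVec φ ψ (j + 1) : Fin (k + 1) → W) = Fin.cons φ (mixVec φ ψ j) := by
        funext i
        refine Fin.cases ?_ (fun i => ?_) i <;> simp [mixVec]
      rw [this, map_cons, ih j (by omega), Multiset.replicate_succ, Multiset.cons_add]
      congr 3
      omega

lemma map_two {k : ℕ} (φ ψ : W) (g : Fin k → W) (hg : ∀ i, g i = φ ∨ g i = ψ) :
    ∃ j ≤ k, Finset.univ.val.map g =
      Multiset.replicate j φ + Multiset.replicate (k - j) ψ := by
  induction k with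
  | zero => exact ⟨0, le_rfl, by simp⟩
  | succ k ih =>
    obtain ⟨j, hj, h⟩ := ih (fun i => g i.succ) (fun i => hg _)
    have hc : g = Fin.cons (g 0) (fun i => g i.succ) := (Fin.cons_self_tail g).symm
    rcases hg 0 with h0 | h0
    · refine ⟨j + 1, by omega, ?_⟩
      rw [hc, map_cons, h, h0, Multiset.replicate_succ, Multiset.cons_add]
      congr 3
      omega
    · refine ⟨j, by omega, ?_⟩
      rw [hc, map_cons, h, h0, Nat.sub_add_comm hj, Multiset.replicate_succ, Multiset.add_cons]

lemma mix_diff (S : MASetup m W) (φ ψ : W) (j : ℕ) (hj : j ≤ m) :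
    S.B (Fin.cons (φ - ψ) (mixVec φ ψ j)) - S.B (Fin.cons (φ - ψ) (mixVec φ ψ (j + 1))) =
      S.bf (φ - ψ) (φ - ψ) (mixVec φ ψ j) := by
  rw [bf_sub_right]
  unfold bf
  rw [S.B_congr (Fin.cons (φ - ψ) (mixVec φ ψ j))
      (Fin.cons (φ - ψ) (Fin.cons ψ (mixVec φ ψ j))),
    S.B_congr (Fin.cons (φ - ψ) (mixVec φ ψ (j + 1)))
      (Fin.cons (φ - ψ) (Fin.cons φ (mixVec φ ψ j)))]
  · ring
  · rw [map_cons, map_cons, map_cons, map_mixVec _ _ _ _ hj, map_mixVec _ _ _ _ (by omega),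
      Multiset.replicate_succ, Multiset.cons_add]
    congr 4
    omega
  · rw [map_cons, map_cons, map_cons, map_mixVec _ _ _ _ hj, map_mixVec _ _ _ _ (by omega),
      Nat.sub_add_comm hj, Multiset.replicate_succ, Multiset.add_cons]

lemma mix_anti (S : MASetup m W) {φ ψ : W} (hφ : φ ∈ S.F) (hψ : ψ ∈ S.F) {i j : ℕ}
    (hij : i ≤ j) (hj : j ≤ m + 1) :
    S.B (Fin.cons (φ - ψ) (mixVec φ ψ j)) ≤ S.B (Fin.cons (φ - ψ) (mixVec φ ψ i)) := by
  induction j, hij using Nat.le_induction with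
  | base => exact le_rfl
  | succ j hij ih =>
    refine le_trans ?_ (ih (by omega))
    have h1 := S.mix_diff φ ψ j (by omega)
    have h2 := S.bf_nonneg (S.sub_mem_W0 hφ hψ) (g := mixVec φ ψ j)
      (fun i => by unfold mixVec; split_ifs <;> assumption)
    linarith

lemma Ifun_eq (S : MASetup m W) (φ ψ : W) : S.Ifun φ ψ =
    S.B (Fin.cons (φ - ψ) (mixVec φ ψ 0)) - S.B (Fin.cons (φ - ψ) (mixVec φ ψ (m + 1))) := by
  have h0 : (mixVec φ ψ 0 : Fin (m + 1) → W) = fun _ => ψ := by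
    funext i; simp [mixVec]
  have h1 : (mixVec φ ψ (m + 1) : Fin (m + 1) → W) = fun _ => φ := by
    funext i; exact if_pos i.isLt
  rw [h0, h1]; rfl

lemma Ifun_nonneg (S : MASetup m W) {φ ψ : W} (hφ : φ ∈ S.F) (hψ : ψ ∈ S.F) :
    0 ≤ S.Ifun φ ψ := by
  rw [Ifun_eq]
  have := S.mix_anti hφ hψ (Nat.zero_le (m + 1)) le_rfl
  linarith

lemma bf_le_Ifun (S : MASetup m W) {φ ψ : W} (hφ : φ ∈ S.F) (hψ : ψ ∈ S.F) (g : Fin m → W)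
    (hg : ∀ i, g i = φ ∨ g i = ψ) : S.bf (φ - ψ) (φ - ψ) g ≤ S.Ifun φ ψ := by
  obtain ⟨j, hj, h⟩ := map_two φ ψ g hg
  rw [S.bf_congr _ _ g (mixVec φ ψ j) (by rw [h, map_mixVec _ _ _ _ hj]), ← S.mix_diff φ ψ j hj,
    Ifun_eq]
  have h1 := S.mix_anti hφ hψ (Nat.zero_le j) (by omega)
  have h2 := S.mix_anti hφ hψ (show j + 1 ≤ m + 1 by omega) le_rfl
  linarith

lemma Ifun_le_Jfun (S : MASetup m W) {φ ψ : W} (hφ : φ ∈ S.F) (hψ : ψ ∈ S.F) :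
    S.Ifun φ ψ ≤ (m + 2) * S.Jfun ψ φ := by
  have h0 : (mixVec φ ψ 0 : Fin (m + 1) → W) = fun _ => ψ := by
    funext i; simp [mixVec]
  rw [Ifun_eq]
  unfold Jfun energy
  rw [← h0, mul_sub, ← mul_assoc, mul_inv_cancel₀ (by positivity), one_mul,
    Finset.sum_range_succ]
  have : ∑ j ∈ Finset.range (m + 1), S.B (Fin.cons (φ - ψ) (mixVec φ ψ j)) ≤
      ∑ j ∈ Finset.range (m + 1), S.B (Fin.cons (φ - ψ) (mixVec φ ψ 0)) :=
    Finset.sum_le_sum fun j hj => S.mix_anti hφ hψ (Nat.zero_le j)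
      (by have := Finset.mem_range.1 hj; omega)
  rw [Finset.sum_const, Finset.card_range, nsmul_eq_mul] at this
  push_cast at this
  linarith

/-! Counting coordinates outside `{x, y}`. -/

open Classical in
/-- Number of coordinates of `g` different from `x` and `y`. -/
noncomputable def cnt (x y : W) (g : Fin m → W) : ℕ :=
  (Finset.univ.filter fun i => ¬ (g i = x ∨ g i = y)).card

lemma cnt_update (x y z : W) (g : Fin m → W) (i : Fin m) (hi : ¬ (g i = x ∨ g i = y))
    (hz : z = x ∨ z = y) : cnt x y (Function.update g i z) < cnt x y g := by
  classical
  unfold cnt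
  apply Finset.card_lt_card
  rw [Finset.ssubset_iff_of_subset]
  · exact ⟨i, by simpa using hi, by simp; tauto⟩
  · intro j hj
    rcases eq_or_ne j i with rfl | hji
    · simpa using hi
    · simpa [hji] using hj

lemma update_mem {s : Set W} {g : Fin m → W} (hg : ∀ i, g i ∈ s) (i : Fin m) {z : W}
    (hz : z ∈ s) (j : Fin m) : Function.update g i z j ∈ s := by
  rcases eq_or_ne j i with rfl | hji
  · simpa using hz
  · simpa [hji] using hg j

/-- Constants in the uniform estimate. -/
noncomputable def Cc (m : ℕ) : ℕ → ℝ → ℝ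
  | 0, _ => m + 2
  | p + 1, ε => (1 + 2 / ε) * Cc m p (ε / 2 / (1 + 2 / ε))

lemma Cc_pos (m p : ℕ) (ε : ℝ) (hε : 0 < ε) : 0 < Cc m p ε := by
  induction p generalizing ε with
  | zero => unfold Cc; positivity
  | succ p ih =>
    unfold Cc
    have := ih (ε / 2 / (1 + 2 / ε)) (by positivity)
    positivity

lemma unif_aux (S : MASetup m W) {y : W} (T : Set W) (hT : T ⊆ S.F) (hy : y ∈ T) (M X : ℝ)
    (hM : ∀ x ∈ T, S.Jfun y x ≤ M) (hM0 : 0 ≤ M)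
    (hX : ∀ x ∈ T, ∀ g : Fin m → W, (∀ i, g i ∈ T) → S.bf (x - y) (x - y) g ≤ X)
    (x : W) (hx : x ∈ T) (p : ℕ) :
    ∀ ε : ℝ, 0 < ε → ∀ g : Fin m → W, (∀ i, g i ∈ T) → cnt x y g ≤ p →
      S.bf (x - y) (x - y) g ≤ Cc m p ε * M + ε * X := by
  classical
  have hX0 : 0 ≤ X := (S.bf_nonneg (S.sub_mem_W0 (hT hy) (hT hy)) (g := fun _ => y)
    (fun _ => hT hy)).trans (hX y hy _ (fun _ => hy))
  have base : ∀ g : Fin m → W, (∀ i, g i = x ∨ g i = y) →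
      S.bf (x - y) (x - y) g ≤ (m + 2) * M := fun g hg =>
    (S.bf_le_Ifun (hT hx) (hT hy) g hg).trans ((S.Ifun_le_Jfun (hT hx) (hT hy)).trans
      (mul_le_mul_of_nonneg_left (hM x hx) (by positivity)))
  induction p with
  | zero =>
    intro ε hε g hg hc
    have : ∀ i, g i = x ∨ g i = y := by
      by_contra hcon
      push Not at hcon
      obtain ⟨i, hi⟩ := hcon
      have := cnt_update x y x g i (by tauto) (Or.inl rfl)
      omega
    have := base g this
    unfold Cc
    nlinarith
  | succ p ih =>
    intro ε hε g hg hc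
    set ε' := ε / 2 / (1 + 2 / ε) with hε'
    have hε'0 : 0 < ε' := by positivity
    have hC := Cc_pos m p ε' hε'0
    have e1 : (1 + 2 / ε) * ε' = ε / 2 := by rw [hε']; field_simp
    have key : Cc m (p + 1) ε * M + ε * X =
        (1 + 2 / ε) * (Cc m p ε' * M + ε' * X) + ε / 2 * X := by
      have : Cc m (p + 1) ε = (1 + 2 / ε) * Cc m p ε' := rfl
      rw [this]; linear_combination (-X) * e1
    rw [key]
    have hR : 0 ≤ Cc m p ε' * M + ε' * X := by positivity
    have h2e : 0 < 2 / ε := by positivity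
    by_cases hall : ∀ i, g i = x ∨ g i = y
    · have h0 : cnt x y g ≤ p := by
        unfold cnt
        simp [hall]
      have := ih ε' hε'0 g hg h0
      nlinarith [mul_nonneg h2e.le hR, mul_nonneg hε.le hX0]
    · push Not at hall
      obtain ⟨i, hi⟩ := hall
      have hi' : ¬ (g i = x ∨ g i = y) := by tauto
      have c1 := cnt_update x y x g i hi' (Or.inl rfl)
      have c2 := cnt_update x y y g i hi' (Or.inr rfl)
      have m1 := update_mem hg i hx
      have m2 := update_mem hg i hy
      have a1 := ih ε' hε'0 _ m1 (by omega)
      have a2 := ih ε' hε'0 _ m2 (by omega)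
      have st := S.bf_step x y (g i) g i
      rw [Function.update_eq_self] at st
      have hw := S.sub_mem_W0 (hT hx) (hT hy)
      have hv := S.sub_mem_W0 (hT (hg i)) (hT hy)
      have b1 := S.bf_weak hw hv (fun j => hT (m1 j)) (half_pos hε)
      have b2 := S.bf_weak hw hv (fun j => hT (m2 j)) (half_pos hε)
      have x1 := hX (g i) (hg i) _ m1
      have x2 := hX (g i) (hg i) _ m2
      have b1' := (le_abs_self _).trans b1
      have b2' := (neg_abs_le _).trans' (neg_le_neg b2)
      have e3 : 1 / (2 * (ε / 2)) = 1 / ε := by field_simp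
      have e4 : 2 / ε = 2 * (1 / ε) := by ring
      rw [e3] at b1' b2'
      have hi0 : 0 ≤ 1 / ε := by positivity
      have p1 := mul_le_mul_of_nonneg_left a1 hi0
      have p2 := mul_le_mul_of_nonneg_left a2 hi0
      have p3 := mul_le_mul_of_nonneg_left x1 (by positivity : 0 ≤ ε / 2 / 2)
      have p4 := mul_le_mul_of_nonneg_left x2 (by positivity : 0 ≤ ε / 2 / 2)
      rw [e4, st]
      linarith

lemma cnt_le (x y : W) (g : Fin m → W) : cnt x y g ≤ m := by
  classical
  unfold cnt
  exact (Finset.card_le_univ _).trans (by simp)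

lemma unif (S : MASetup m W) {y : W} (T : Finset W) (hT : ↑T ⊆ S.F) (hy : y ∈ T) (M : ℝ)
    (hM : ∀ x ∈ T, S.Jfun y x ≤ M) (hM0 : 0 ≤ M) (x : W) (hx : x ∈ T) (g : Fin m → W)
    (hg : ∀ i, g i ∈ T) : S.bf (x - y) (x - y) g ≤ 2 * Cc m m (1 / 2) * M := by
  classical
  let P : Finset (W × (Fin m → W)) := T ×ˢ Fintype.piFinset (fun _ => T)
  have hP : ∀ x g, (x, g) ∈ P ↔ x ∈ T ∧ ∀ i, g i ∈ T := fun x g => by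
    simp [P]
  obtain ⟨⟨x0, g0⟩, h0, hmax⟩ := P.exists_max_image
    (fun q => S.bf (q.1 - y) (q.1 - y) q.2) ⟨(x, g), (hP _ _).2 ⟨hx, hg⟩⟩
  have h0' := (hP _ _).1 h0
  have := S.unif_aux (T : Set W) hT hy M (S.bf (x0 - y) (x0 - y) g0) hM hM0
    (fun x hx g hg => hmax (x, g) ((hP _ _).2 ⟨hx, hg⟩)) x0 h0'.1 m (1 / 2) (by norm_num)
    g0 h0'.2 (cnt_le _ _ _)
  have h2 := hmax (x, g) ((hP _ _).2 ⟨hx, hg⟩)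
  simp only at h2
  linarith

lemma unif2 (S : MASetup m W) {y : W} (T : Finset W) (hT : ↑T ⊆ S.F) (hy : y ∈ T) (M : ℝ)
    (hM : ∀ x ∈ T, S.Jfun y x ≤ M) (hM0 : 0 ≤ M) (x : W) (hx : x ∈ T) (z : W) (hz : z ∈ T)
    (g : Fin m → W) (hg : ∀ i, g i ∈ T) :
    S.bf (x - z) (x - z) g ≤ 8 * Cc m m (1 / 2) * M := by
  have h1 := S.unif T hT hy M hM hM0 x hx g hg
  have h2 := S.unif T hT hy M hM hM0 z hz g hg
  have h3 := S.bf_quad (S.sub_mem_W0 (hT hx) (hT hy)) (S.sub_mem_W0 (hT hz) (hT hy))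
    (fun i => hT (hg i)) (-1)
  have e : x - z = (x - y) - (z - y) := by abel
  rw [e, S.bf_sub_left (x - y) (z - y), S.bf_sub_right (x - y) (z - y),
    S.bf_sub_right (x - y) (z - y), S.bf_comm (z - y) (x - y)]
  linarith

lemma interp (S : MASetup m W) (T : Set W) (hT : T ⊆ S.F) {x y : W} (hx : x ∈ T) (hy : y ∈ T)
    (K : ℝ) (hK0 : 0 ≤ K)
    (hK : ∀ z ∈ T, ∀ w ∈ T, ∀ g : Fin m → W, (∀ i, g i ∈ T) → S.bf (z - w) (z - w) g ≤ K)
    (p : ℕ) : ∀ g : Fin m → W, (∀ i, g i ∈ T) → cnt x y g ≤ p →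
      S.bf (x - y) (x - y) g ≤
        9 * (S.Ifun x y ^ ((1 : ℝ) / 2 ^ p) * K ^ (1 - (1 : ℝ) / 2 ^ p)) := by
  have hI := S.Ifun_nonneg (hT hx) (hT hy)
  induction p with
  | zero =>
    intro g hg hc
    have : ∀ i, g i = x ∨ g i = y := by
      by_contra hcon
      push Not at hcon
      obtain ⟨i, hi⟩ := hcon
      have := cnt_update x y x g i (by tauto) (Or.inl rfl)
      omega
    have := S.bf_le_Ifun (hT hx) (hT hy) g this
    simp
    linarith
  | succ p ih =>
    intro g hg hc
    set A := S.Ifun x y ^ ((1 : ℝ) / 2 ^ p) * K ^ (1 - (1 : ℝ) / 2 ^ p) with hA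
    have hA0 : 0 ≤ A := by positivity
    set D := S.Ifun x y ^ ((1 : ℝ) / 2 ^ (p + 1)) * K ^ (1 - (1 : ℝ) / 2 ^ (p + 1)) with hD
    have hD0 : 0 ≤ D := by positivity
    have hp1 : (1 : ℝ) / 2 ^ p ≤ 1 := by
      rw [div_le_one (by positivity)]; exact one_le_pow₀ (by norm_num)
    have hDA : D ^ 2 = A * K := by
      rw [hD, hA, mul_pow, ← Real.rpow_mul_natCast hI, ← Real.rpow_mul_natCast hK0, mul_assoc]
      congr 1
      · congr 1
        rw [pow_succ]; push_cast; field_simp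
      · conv_rhs => rw [← Real.rpow_one K]
        rw [Real.rpow_one, ← Real.rpow_add_one' hK0 (by linarith)]
        congr 1
        rw [pow_succ]; push_cast; field_simp; ring
    have hw := S.sub_mem_W0 (hT hx) (hT hy)
    have small : ∀ a b c : ℝ, 0 ≤ a → a ≤ 9 * A → b ≤ K → 0 ≤ b → c ^ 2 ≤ a * b → c ≤ 3 * D := by
      intro a b c h1 h2 h3 h3' h4
      have h5 : a * b ≤ 9 * A * K := mul_le_mul h2 h3 h3' (by positivity)
      apply le_of_abs_le
      apply abs_le_of_sq_le_sq _ (by positivity)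
      rw [mul_pow, hDA]
      linarith
    by_cases h0 : cnt x y g ≤ p
    · have h1 := ih g hg h0
      have h2 := S.bf_nonneg hw (fun i => hT (hg i))
      have := small _ _ _ h2 h1 (hK x hx y hy g hg) h2 (sq _).le
      linarith
    · have : ∃ i, ¬ (g i = x ∨ g i = y) := by
        by_contra hcon
        push Not at hcon
        apply h0
        unfold cnt
        simp [hcon]
      obtain ⟨i, hi⟩ := this
      have c1 := cnt_update x y x g i hi (Or.inl rfl)
      have c2 := cnt_update x y y g i hi (Or.inr rfl)
      have m1 := update_mem hg i hx
      have m2 := update_mem hg i hy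
      have m1' := fun j => hT (m1 j)
      have m2' := fun j => hT (m2 j)
      have a1 := ih _ m1 (by omega)
      have a2 := ih _ m2 (by omega)
      have st := S.bf_step x y (g i) g i
      rw [Function.update_eq_self] at st
      have hv := S.sub_mem_W0 (hT (hg i)) (hT hy)
      have s0 := small _ _ _ (S.bf_nonneg hw m2') a2 (hK x hx y hy _ m2)
        (S.bf_nonneg hw m2') (sq _).le
      have s1 := small _ _ _ (S.bf_nonneg hw m1') a1 (hK (g i) (hg i) y hy _ m1)
        (S.bf_nonneg hv m1') (S.bf_cs hw hv m1')
      have s2 := small _ _ (-S.bf (x - y) (g i - y) (Function.update g i y))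
        (S.bf_nonneg hw m2') a2 (hK (g i) (hg i) y hy _ m2)
        (S.bf_nonneg hv m2') (by rw [neg_sq]; exact S.bf_cs hw hv m2')
      rw [st]
      linarith

lemma Jfun_nonneg (S : MASetup m W) {φ ψ : W} (hφ : φ ∈ S.F) (hψ : ψ ∈ S.F) :
    0 ≤ S.Jfun ψ φ := by
  have h1 := S.Ifun_nonneg hφ hψ
  have h2 := S.Ifun_le_Jfun hφ hψ
  by_contra h
  have : ((m : ℝ) + 2) * S.Jfun ψ φ < 0 := mul_neg_of_pos_of_neg (by positivity) (by linarith)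
  linarith

lemma Jfun_self (S : MASetup m W) (ψ : W) : S.Jfun ψ ψ = 0 := by
  have h : ∀ g : Fin (m + 1) → W, S.B (Fin.cons (ψ - ψ) g) = 0 := fun g =>
    S.B.map_coord_zero 0 (by simp)
  unfold Jfun energy
  simp only [h]
  simp

end MASetup

/-- there is `C > 0` depending only on `n = m + 1` such that for
every setup, reference `φ_ref ∈ F`, and all `φ₁, φ₂, ψ₁, …, ψ_{n-1} ∈ F`:
`-B(φ₁-φ₂, φ₁-φ₂, ψ₁, …, ψ_{n-1}) ≤ C I(φ₁,φ₂)^{1/2^{n-1}}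
  (max{J(φ₁), J(φ₂), J(ψ₁), …, J(ψ_{n-1})})^{1-1/2^{n-1}}`. -/
theorem hodge_interpolation_J (m : ℕ) :
    ∃ C : ℝ, 0 < C ∧
      ∀ (W : Type*) [AddCommGroup W] [Module ℝ W] (S : MASetup m W),
        ∀ φref ∈ S.F, ∀ φ₁ ∈ S.F, ∀ φ₂ ∈ S.F,
          ∀ ψs : Fin m → W, (∀ i, ψs i ∈ S.F) →
            -S.B (Fin.cons (φ₁ - φ₂) (Fin.cons (φ₁ - φ₂) ψs)) ≤
              C * S.Ifun φ₁ φ₂ ^ ((1 : ℝ) / 2 ^ m) *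
                (Finset.univ.sup' Finset.univ_nonempty
                    (Fin.cons (S.Jfun φref φ₁)
                      (Fin.cons (S.Jfun φref φ₂) fun i => S.Jfun φref (ψs i)) :
                      Fin (m + 2) → ℝ)) ^ (1 - (1 : ℝ) / 2 ^ m) := by
  have hC := MASetup.Cc_pos m m (1 / 2) (by norm_num)
  refine ⟨9 * (8 * MASetup.Cc m m (1 / 2)) ^ (1 - (1 : ℝ) / 2 ^ m), by positivity, ?_⟩
  intro W _ _ S φref href φ₁ h₁ φ₂ h₂ ψs hψ
  classical
  set M := Finset.univ.sup' Finset.univ_nonempty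
                    (Fin.cons (S.Jfun φref φ₁)
                      (Fin.cons (S.Jfun φref φ₂) fun i => S.Jfun φref (ψs i)) :
                      Fin (m + 2) → ℝ) with hMdef
  have hle := fun i => Finset.le_sup' (Fin.cons (S.Jfun φref φ₁)
                      (Fin.cons (S.Jfun φref φ₂) fun i => S.Jfun φref (ψs i)) :
                      Fin (m + 2) → ℝ) (Finset.mem_univ i)
  have hM1 : S.Jfun φref φ₁ ≤ M := hle 0
  have hM2 : S.Jfun φref φ₂ ≤ M := hle (Fin.succ 0)
  have hM3 : ∀ i, S.Jfun φref (ψs i) ≤ M := fun i => hle i.succ.succ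
  have hM0 : 0 ≤ M := (S.Jfun_nonneg h₁ href).trans hM1
  let T : Finset W := {φref, φ₁, φ₂} ∪ Finset.univ.image ψs
  have hT : (T : Set W) ⊆ S.F := by
    intro z hz
    simp only [T, Finset.coe_union, Finset.coe_insert, Finset.coe_singleton, Finset.coe_image,
      Finset.coe_univ, Set.image_univ] at hz
    rcases hz with (rfl | rfl | rfl) | ⟨i, rfl⟩
    exacts [href, h₁, h₂, hψ i]
  have hTM : ∀ x ∈ T, S.Jfun φref x ≤ M := by
    intro z hz
    simp only [T, Finset.mem_union, Finset.mem_insert, Finset.mem_singleton, Finset.mem_image,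
      Finset.mem_univ, true_and] at hz
    rcases hz with (rfl | rfl | rfl) | ⟨i, rfl⟩
    exacts [(S.Jfun_self _).trans_le hM0, hM1, hM2, hM3 i]
  have r0 : φref ∈ T := by simp [T]
  have r1 : φ₁ ∈ T := by simp [T]
  have r2 : φ₂ ∈ T := by simp [T]
  have r3 : ∀ i, ψs i ∈ T := by simp [T]
  have := S.interp (T : Set W) hT r1 r2 (8 * MASetup.Cc m m (1 / 2) * M) (by positivity)
    (fun z hz w hw g hg => S.unif2 T hT r0 M hTM hM0 z hz w hw g hg) m ψs r3
    (MASetup.cnt_le _ _ _)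
  rw [Real.mul_rpow (by positivity) hM0] at this
  unfold MASetup.bf at this
  linarith
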